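/- Lemma 2.2: Assume (h1), (h2) and (h3). Then condition (h3⁰) holds: whenever u ∈ Ū, λ ∈ (0,1) and u(t) = λ·N(u)(t) for all t ∈ [0,a], one has ‖u(t)‖ < R(t) for all t ∈ [0,a]. -/

import Mathlib

open MeasureTheory

/-- The set `Ū` of continuous functions `u : [0,a] → X` with `‖u t‖ ≤ R t` for all `t`. -/
def UbarSet {X : Type*} [NormedAddCommGroup X] (a : ℝ) (R : ℝ → ℝ) :
    Set C(Set.Icc (0:ℝ) a, X) :=
  {u | ∀ t : Set.Icc (0:ℝ) a, ‖u t‖ ≤ R t}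

open Set in
lemma bihari_aux {t lam M r R : ℝ} (δ ψ w : ℝ → ℝ) (ht : 0 ≤ t) (hlam0 : 0 < lam)
    (hlam : lam < 1) (hM : 0 < M) (hr0 : 0 ≤ r) (hrR : r < R)
    (hδ : IntegrableOn δ (Icc 0 t)) (hδ0 : ∀ s, 0 ≤ δ s)
    (hψc : ContinuousOn ψ (Ici 0)) (hψm : MonotoneOn ψ (Ici 0))
    (hψpos : ∀ s : ℝ, 0 < s → 0 < ψ s) (hψ0 : ∀ s : ℝ, 0 ≤ s → 0 ≤ ψ s)
    (hw : Continuous w) (hw0 : ∀ s, 0 ≤ w s)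
    (hle : ∀ s ∈ Icc 0 t, w s ≤ lam * (r + M * ∫ x in (0:ℝ)..s, δ x * ψ (w x)))
    (hB : M * (∫ s in (0:ℝ)..t, δ s) ≤ ∫ τ in r..R, (ψ τ)⁻¹) :
    r + M * (∫ x in (0:ℝ)..t, δ x * ψ (w x)) ≤ R := by
  have hψw : Continuous fun x => ψ (w x) := hψc.comp_continuous hw hw0
  have hδψ : IntegrableOn (fun x => δ x * ψ (w x)) (Icc 0 t) :=
    hδ.mul_continuousOn hψw.continuousOn isCompact_Icc
  have ii : ∀ (f : ℝ → ℝ), IntegrableOn f (Icc 0 t) → ∀ x ∈ Icc 0 t, ∀ y ∈ Icc 0 t,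
      IntervalIntegrable f volume x y := by
    intro f hf x hx y hy
    rw [intervalIntegrable_iff]
    refine hf.mono_set ?_
    exact (uIoc_subset_uIcc).trans (uIcc_subset_Icc hx hy)
  have h0t : (0:ℝ) ∈ Icc 0 t := ⟨le_rfl, ht⟩
  have htt : t ∈ Icc 0 t := ⟨ht, le_rfl⟩
  have cont : ∀ (f : ℝ → ℝ), IntegrableOn f (Icc 0 t) →
      ContinuousOn (fun s => ∫ x in (0:ℝ)..s, f x) (Icc 0 t) := by
    intro f hf
    have := intervalIntegral.continuousOn_primitive_interval (μ := volume) (f := f) (a := 0) (b := t)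
      (by rwa [uIcc_of_le ht])
    rwa [uIcc_of_le ht] at this
  set g : ℝ → ℝ := fun s => r + M * ∫ x in (0:ℝ)..s, δ x * ψ (w x) with hg
  set H : ℝ → ℝ := fun s => M * ∫ x in (0:ℝ)..s, δ x with hH
  have hgc : ContinuousOn g (Icc 0 t) := continuousOn_const.add (continuousOn_const.mul (cont _ hδψ))
  have hHc : ContinuousOn H (Icc 0 t) := continuousOn_const.mul (cont _ hδ)
  have gdiff : ∀ x ∈ Icc 0 t, ∀ y ∈ Icc 0 t, g y - g x = M * ∫ s in x..y, δ s * ψ (w s) := by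
    intro x hx y hy
    have := intervalIntegral.integral_interval_sub_left (ii _ hδψ 0 h0t y hy) (ii _ hδψ 0 h0t x hx)
    rw [← this]; simp only [hg]; ring
  have Hdiff : ∀ x ∈ Icc 0 t, ∀ y ∈ Icc 0 t, H y - H x = M * ∫ s in x..y, δ s := by
    intro x hx y hy
    have := intervalIntegral.integral_interval_sub_left (ii _ hδ 0 h0t y hy) (ii _ hδ 0 h0t x hx)
    rw [← this]; simp only [hH]; ring
  have gmono : ∀ x ∈ Icc 0 t, ∀ y ∈ Icc 0 t, x ≤ y → g x ≤ g y := by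
    intro x hx y hy hxy
    have := gdiff x hx y hy
    have h2 : 0 ≤ ∫ s in x..y, δ s * ψ (w s) :=
      intervalIntegral.integral_nonneg hxy (fun s _ => mul_nonneg (hδ0 s) (hψ0 _ (hw0 s)))
    nlinarith [mul_nonneg hM.le h2]
  have Hmono : ∀ x ∈ Icc 0 t, ∀ y ∈ Icc 0 t, x ≤ y → H x ≤ H y := by
    intro x hx y hy hxy
    have := Hdiff x hx y hy
    have h2 : 0 ≤ ∫ s in x..y, δ s :=
      intervalIntegral.integral_nonneg hxy (fun s _ => hδ0 s)
    nlinarith [mul_nonneg hM.le h2]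
  have g0 : g 0 = r := by simp [hg]
  have H0 : H 0 = 0 := by simp [hH]
  -- integrability of the reciprocal away from zero
  have hinvc : ContinuousOn (fun τ => (ψ τ)⁻¹) (Ioi 0) :=
    (hψc.mono Ioi_subset_Ici_self).inv₀ (fun x hx => (hψpos x hx).ne')
  have hinvi : ∀ x y : ℝ, 0 < x → 0 < y → IntervalIntegrable (fun τ => (ψ τ)⁻¹) volume x y := by
    intro x y hx hy
    apply ContinuousOn.intervalIntegrable
    refine hinvc.mono ?_
    intro z hz
    exact lt_of_lt_of_le (lt_min hx hy) hz.1
  -- the key local step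
  have step : ∀ x ∈ Icc 0 t, ∀ y ∈ Icc 0 t, x ≤ y → 0 < g x → lam * g y ≤ g x →
      ∫ τ in (g x)..(g y), (ψ τ)⁻¹ ≤ H y - H x := by
    intro x hx y hy hxy hgx hl
    have hgy := gmono x hx y hy hxy
    have e1 : ∫ s in x..y, δ s * ψ (w s) ≤ ∫ s in x..y, δ s * ψ (g x) := by
      apply intervalIntegral.integral_mono_on hxy (ii _ hδψ x hx y hy)
        ((ii _ hδ x hx y hy).mul_const _)
      intro s hs
      have hs' : s ∈ Icc 0 t := ⟨hx.1.trans hs.1, hs.2.trans hy.2⟩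
      refine mul_le_mul_of_nonneg_left (hψm (hw0 s) hgx.le ?_) (hδ0 s)
      have h1 := hle s hs'
      have h2 := gmono s hs' y hy hs.2
      calc w s ≤ lam * g s := h1
        _ ≤ lam * g y := by gcongr
        _ ≤ g x := hl
    rw [intervalIntegral.integral_mul_const] at e1
    have e2 : ∫ τ in (g x)..(g y), (ψ τ)⁻¹ ≤ ∫ τ in (g x)..(g y), (ψ (g x))⁻¹ := by
      apply intervalIntegral.integral_mono_on hgy (hinvi _ _ hgx (hgx.trans_le hgy))
        intervalIntegrable_const
      intro τ hτ
      exact inv_anti₀ (hψpos _ hgx) (hψm hgx.le (hgx.le.trans hτ.1) hτ.1)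
    rw [intervalIntegral.integral_const, smul_eq_mul] at e2
    have hp := hψpos _ hgx
    rw [gdiff x hx y hy] at e2
    rw [Hdiff x hx y hy]
    refine e2.trans ?_
    rw [← div_eq_mul_inv, div_le_iff₀ hp]
    nlinarith
  -- global Bihari inequality
  have glob : ∀ x ∈ Icc 0 t, 0 < g x → ∫ τ in (g x)..(g t), (ψ τ)⁻¹ ≤ H t - H x := by
    intro x hx hgx
    have hsub : Icc x t ⊆ Icc 0 t := Icc_subset_Icc_left hx.1
    set q : ℝ → ℝ := fun τ => (ψ (max τ (g x)))⁻¹ with hq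
    have hqc : Continuous q := hinvc.comp_continuous (by fun_prop)
      (fun z => lt_of_lt_of_le hgx (le_max_right _ _))
    have hqe : ∀ y, g x ≤ y → ∫ τ in (g x)..y, q τ = ∫ τ in (g x)..y, (ψ τ)⁻¹ := by
      intro y hy
      apply intervalIntegral.integral_congr
      intro z hz
      rw [uIcc_of_le hy] at hz
      simp only [hq, max_eq_left hz.1]
    have hGc : Continuous fun y => ∫ τ in (g x)..y, q τ :=
      intervalIntegral.continuous_primitive (fun _ _ => hqc.intervalIntegrable _ _) _
    have hcl : IsClosed ({s | ∫ τ in (g x)..(g s), q τ ≤ H s - H x} ∩ Icc x t) := by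
      have c1 : ContinuousOn (fun s => ∫ τ in (g x)..(g s), q τ) (Icc x t) :=
        hGc.comp_continuousOn (hgc.mono hsub)
      have c2 : ContinuousOn (fun s => H s - H x) (Icc x t) :=
        (hHc.mono hsub).sub continuousOn_const
      have := isClosed_Icc.isClosed_le c1 c2
      convert this using 1
      ext s; simp [and_comm]
    have key : Icc x t ⊆ {s | ∫ τ in (g x)..(g s), q τ ≤ H s - H x} := by
      apply hcl.Icc_subset_of_forall_mem_nhdsWithin
      · simp
      · rintro s ⟨hs, hsx, hst⟩
        have hs0 : s ∈ Icc 0 t := hsub ⟨hsx, hst.le⟩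
        have hgs := gmono x hx s hs0 hsx
        have hgs0 := hgx.trans_le hgs
        have hcw : Filter.Tendsto (fun y => lam * g y) (nhdsWithin s (Ioi s))
            (nhds (lam * g s)) := by
          have h1 : ContinuousWithinAt g (Icc s t) s := (hgc s hs0).mono
            (Icc_subset_Icc_left hs0.1)
          have h2 : Filter.Tendsto g (nhdsWithin s (Ioi s)) (nhds (g s)) := by
            have := h1.mono_left (nhdsWithin_mono s (Ioc_subset_Icc_self))
            rwa [nhdsWithin_Ioc_eq_nhdsGT hst] at this
          exact h2.const_mul _
        have hlt : lam * g s < g s := by nlinarith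
        filter_upwards [hcw.eventually (gt_mem_nhds hlt), Ioc_mem_nhdsGT hst] with y hy hyI
        have hy0 : y ∈ Icc 0 t := ⟨hs0.1.trans hyI.1.le, hyI.2⟩
        have hgy := gmono s hs0 y hy0 hyI.1.le
        have st := step s hs0 y hy0 hyI.1.le hgs0 hy.le
        have hs' : ∫ τ in (g x)..(g s), q τ ≤ H s - H x := hs
        rw [hqe _ hgs] at hs'
        show ∫ τ in (g x)..(g y), q τ ≤ H y - H x
        rw [hqe _ (hgs.trans hgy), ← intervalIntegral.integral_add_adjacent_intervals
          (hinvi _ _ hgx hgs0) (hinvi _ _ hgs0 (hgs0.trans_le hgy))]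
        linarith
    have := key ⟨hx.2, le_rfl⟩
    rw [← hqe _ (gmono x hx t htt hx.2)]
    exact this
  by_contra! hcon
  have hcon' : R < g t := hcon
  have hR0 : 0 < R := hr0.trans_lt hrR
  have hHB : H t ≤ ∫ τ in r..R, (ψ τ)⁻¹ := hB
  by_cases hint : IntervalIntegrable (fun τ => (ψ τ)⁻¹) volume r R
  · -- integrable case
    have hpos : 0 < ∫ τ in R..(g t), (ψ τ)⁻¹ :=
      intervalIntegral.intervalIntegral_pos_of_pos_on (hinvi _ _ hR0 (hR0.trans hcon'))
        (fun z hz => inv_pos.2 (hψpos _ (hR0.trans hz.1))) hcon'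
    have hsmall : ∀ e ∈ Ioo r R, ∫ τ in R..(g t), (ψ τ)⁻¹ ≤ ∫ τ in r..e, (ψ τ)⁻¹ := by
      intro e he
      have he0 : 0 < e := hr0.trans_lt he.1
      obtain ⟨x, hx, rfl⟩ : e ∈ g '' Icc 0 t :=
        intermediate_value_Icc ht hgc ⟨by rw [g0]; exact he.1.le, (he.2.trans hcon').le⟩
      have h1 := glob x hx he0
      have h2 := Hmono 0 h0t x hx hx.1
      rw [← intervalIntegral.integral_add_adjacent_intervals
          (hinvi _ _ he0 hR0) (hinvi _ _ hR0 (hR0.trans hcon'))] at h1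
      have i1 : IntervalIntegrable (fun τ => (ψ τ)⁻¹) volume r (g x) := by
        refine hint.mono_set ?_
        rw [uIcc_of_le he.1.le, uIcc_of_le hrR.le]
        exact Icc_subset_Icc_right he.2.le
      rw [← intervalIntegral.integral_add_adjacent_intervals i1
          (hinvi _ _ he0 hR0)] at hHB
      linarith
    have hc : ContinuousOn (fun e => ∫ τ in r..e, (ψ τ)⁻¹) (Icc r R) := by
      have := intervalIntegral.continuousOn_primitive_interval (μ := volume)
        (f := fun τ => (ψ τ)⁻¹) (a := r) (b := R)
        (by rw [uIcc_of_le hrR.le]; rwa [intervalIntegrable_iff_integrableOn_Icc_of_le hrR.le] at hint)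
      rwa [uIcc_of_le hrR.le] at this
    have hlim : Filter.Tendsto (fun e => ∫ τ in r..e, (ψ τ)⁻¹) (nhdsWithin r (Ioi r)) (nhds 0) := by
      have := (hc r ⟨le_rfl, hrR.le⟩).mono_left (nhdsWithin_mono r (Ioo_subset_Icc_self))
      rw [nhdsWithin_Ioo_eq_nhdsGT hrR] at this
      simpa using this
    have := ge_of_tendsto hlim (Filter.mem_of_superset (Ioo_mem_nhdsGT hrR) hsmall)
    linarith
  · rw [intervalIntegral.integral_undef hint] at hHB
    have hHt : H t = 0 := le_antisymm hHB (by rw [← H0]; exact Hmono 0 h0t t htt ht)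
    have hδz : ∫ s in (0:ℝ)..t, δ s = 0 := by
      rcases mul_eq_zero.1 hHt with h | h
      · exact absurd h hM.ne'
      · exact h
    rw [intervalIntegral.integral_eq_zero_iff_of_le_of_nonneg_ae ht
      (Filter.Eventually.of_forall hδ0) (ii _ hδ 0 h0t t htt)] at hδz
    have : ∫ x in (0:ℝ)..t, δ x * ψ (w x) = 0 := by
      rw [intervalIntegral.integral_of_le ht]
      apply integral_eq_zero_of_ae
      filter_upwards [hδz] with x hx
      simp [hx]
    have : g t = r := by simp [hg, this]
    linarith

/-- **Lemma 2.2.** Under (h1), (h2) and (h3), condition (h3⁰) holds: if `u ∈ Ū`,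
`λ ∈ (0,1)` and `u = λ·N(u)`, then `‖u t‖ < R t` for all `t ∈ [0,a]`. -/
theorem stmt_2
    {X : Type*} [NormedAddCommGroup X] [NormedSpace ℝ X] [CompleteSpace X]
    {a : ℝ} (ha : 0 < a)
    (T : ℝ → ℝ → X →L[ℝ] X)
    (hTcont : ContinuousOn (fun p : ℝ × ℝ => T p.1 p.2)
      {p : ℝ × ℝ | 0 ≤ p.2 ∧ p.2 ≤ p.1 ∧ p.1 ≤ a})
    (hTid : ∀ s ∈ Set.Icc (0:ℝ) a, T s s = ContinuousLinearMap.id ℝ X)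
    (hTsemi : ∀ s r t : ℝ, 0 ≤ s → s ≤ r → r ≤ t → t ≤ a → (T t r).comp (T r s) = T t s)
    {M : ℝ} (hM : 0 < M)
    (hTM : ∀ t s : ℝ, 0 ≤ s → s ≤ t → t ≤ a → ‖T t s‖ ≤ M)
    (R : ℝ → ℝ) (hRc : ContinuousOn R (Set.Icc 0 a))
    (hRpos : ∀ t ∈ Set.Icc (0:ℝ) a, 0 < R t)
    -- (h1)
    (Φ : C(Set.Icc (0:ℝ) a, X) → ℝ → X)
    (hΦint : ∀ u ∈ UbarSet (X := X) a R, IntegrableOn (Φ u) (Set.Icc 0 a))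
    (hΦcont : ∀ (v : ℕ → C(Set.Icc (0:ℝ) a, X)) (u : C(Set.Icc (0:ℝ) a, X)),
      (∀ n, v n ∈ UbarSet (X := X) a R) → u ∈ UbarSet (X := X) a R →
      Filter.Tendsto (fun n => ‖v n - u‖) Filter.atTop (nhds 0) →
      Filter.Tendsto (fun n => ∫ s in Set.Icc (0:ℝ) a, ‖Φ (v n) s - Φ u s‖)
        Filter.atTop (nhds 0))
    -- (h2)
    (F : C(Set.Icc (0:ℝ) a, X) →L[ℝ] X) (B : X →L[ℝ] X)
    (W : X → C(Set.Icc (0:ℝ) a, X))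
    (hW : ∀ (x : X) (t : Set.Icc (0:ℝ) a), W x t = T (t : ℝ) 0 x)
    (hBleft : ∀ x : X, B (x - F (W x)) = x)
    (hBright : ∀ x : X, B x - F (W (B x)) = x)
    -- the support [0, a_F] of F
    {aF : ℝ} (haF : aF ∈ Set.Icc (0:ℝ) a)
    (hsupp : ∀ u v : C(Set.Icc (0:ℝ) a, X),
      (∀ t : Set.Icc (0:ℝ) a, (t : ℝ) ≤ aF → u t = v t) → F u = F v)
    -- (h3)
    (δ : ℝ → ℝ) (hδint : IntegrableOn δ (Set.Icc 0 a)) (hδ0 : ∀ t, 0 ≤ δ t)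
    (ψ : ℝ → ℝ) (hψc : ContinuousOn ψ (Set.Ici 0)) (hψm : MonotoneOn ψ (Set.Ici 0))
    (hψ0 : ∀ s : ℝ, 0 ≤ s → 0 ≤ ψ s) (hψpos : ∀ s : ℝ, 0 < s → 0 < ψ s)
    (hΦgrowth : ∀ u ∈ UbarSet (X := X) a R,
      ∀ᵐ t ∂(volume.restrict (Set.Icc 0 a)), ∀ ht : t ∈ Set.Icc (0:ℝ) a,
        ‖Φ u t‖ ≤ δ t * ψ ‖u ⟨t, ht⟩‖)
    (hr : ∀ t ∈ Set.Icc (0:ℝ) a,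
      M ^ 2 * ‖B.comp F‖ * (∫ s in (0:ℝ)..aF, δ s * ψ (R s)) < R t)
    (hBihari : ∀ t ∈ Set.Icc (0:ℝ) a,
      M * (∫ s in (0:ℝ)..t, δ s) ≤
        ∫ τ in (M ^ 2 * ‖B.comp F‖ * (∫ s in (0:ℝ)..aF, δ s * ψ (R s)))..(R t), (ψ τ)⁻¹)
    -- the operator N of the problem
    (N : C(Set.Icc (0:ℝ) a, X) → C(Set.Icc (0:ℝ) a, X))
    (hN : ∀ u ∈ UbarSet (X := X) a R, ∃ v : C(Set.Icc (0:ℝ) a, X),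
      (∀ t : Set.Icc (0:ℝ) a, v t = ∫ s in (0:ℝ)..(t : ℝ), T (t : ℝ) s (Φ u s)) ∧
      ∀ t : Set.Icc (0:ℝ) a,
        N u t = T (t : ℝ) 0 (B (F v)) + ∫ s in (0:ℝ)..(t : ℝ), T (t : ℝ) s (Φ u s)) :
    -- conclusion: (h3⁰)
    ∀ u ∈ UbarSet (X := X) a R, ∀ lam : ℝ, 0 < lam → lam < 1 →
      (∀ t : Set.Icc (0:ℝ) a, u t = lam • N u t) →
      ∀ t : Set.Icc (0:ℝ) a, ‖u t‖ < R t := by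
  intro u hu lam hlam0 hlam1 hfix t
  obtain ⟨v, hv, hNu⟩ := hN u hu
  have hgr := hΦgrowth u hu
  have hΦi := hΦint u hu
  have h0a : (0:ℝ) ∈ Set.Icc 0 a := ⟨le_rfl, ha.le⟩
  set w : ℝ → ℝ := fun s => ‖u (Set.projIcc 0 a ha.le s)‖ with hwdef
  have hw : Continuous w := (u.continuous.comp continuous_projIcc).norm
  have hw0 : ∀ s, 0 ≤ w s := fun s => norm_nonneg _
  have hwu : ∀ s (hs : s ∈ Set.Icc 0 a), w s = ‖u ⟨s, hs⟩‖ := by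
    intro s hs
    simp only [hwdef, Set.projIcc_of_mem ha.le hs]
  have hψw : Continuous fun x => ψ (w x) := hψc.comp_continuous hw hw0
  have hψR : ContinuousOn (fun x => ψ (R x)) (Set.Icc 0 a) :=
    hψc.comp hRc (fun x hx => (hRpos x hx).le)
  have i1 : IntegrableOn (fun x => δ x * ψ (w x)) (Set.Icc 0 a) :=
    hδint.mul_continuousOn hψw.continuousOn isCompact_Icc
  have i2 : IntegrableOn (fun x => δ x * ψ (R x)) (Set.Icc 0 a) :=
    hδint.mul_continuousOn hψR isCompact_Icc
  have ii : ∀ (f : ℝ → ℝ), IntegrableOn f (Set.Icc 0 a) → ∀ x ∈ Set.Icc 0 a,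
      IntervalIntegrable f volume 0 x := by
    intro f hf x hx
    rw [intervalIntegrable_iff_integrableOn_Icc_of_le hx.1]
    exact hf.mono_set (Set.Icc_subset_Icc_right hx.2)
  have hRw : ∀ s ∈ Set.Icc 0 a, δ s * ψ (w s) ≤ δ s * ψ (R s) := by
    intro s hs
    refine mul_le_mul_of_nonneg_left (hψm (hw0 s) (hRpos s hs).le ?_) (hδ0 s)
    rw [hwu s hs]
    exact hu ⟨s, hs⟩
  have hRn : ∀ s ∈ Set.Icc 0 a, 0 ≤ δ s * ψ (R s) :=
    fun s hs => mul_nonneg (hδ0 s) (hψ0 _ (hRpos s hs).le)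
  -- pointwise bound for v
  have hvb : ∀ s : Set.Icc (0:ℝ) a, ‖v s‖ ≤ M * ∫ x in (0:ℝ)..(s:ℝ), δ x * ψ (w x) := by
    intro s
    rw [hv s, ← intervalIntegral.integral_const_mul]
    apply intervalIntegral.norm_integral_le_of_norm_le s.2.1 _ ((ii _ i1 s s.2).const_mul M)
    rw [ae_restrict_iff' measurableSet_Icc] at hgr
    filter_upwards [hgr] with x hx hxs
    have hxa : x ∈ Set.Icc 0 a := ⟨hxs.1.le, hxs.2.trans s.2.2⟩
    have h1 := hx hxa hxa
    rw [← hwu x hxa] at h1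
    calc ‖T s x (Φ u x)‖ ≤ ‖T s x‖ * ‖Φ u x‖ := (T s x).le_opNorm _
      _ ≤ M * (δ x * ψ (w x)) :=
        mul_le_mul (hTM s x hxa.1 hxs.2 s.2.2) h1 (norm_nonneg _) hM.le
  set IR : ℝ := ∫ s in (0:ℝ)..aF, δ s * ψ (R s) with hIR
  have hIR0 : 0 ≤ IR := intervalIntegral.integral_nonneg haF.1
    (fun s hs => hRn s ⟨hs.1, hs.2.trans haF.2⟩)
  -- truncation of v at aF
  let tr : C(Set.Icc (0:ℝ) a, Set.Icc (0:ℝ) a) :=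
    ⟨fun s => ⟨min (s:ℝ) aF, le_min s.2.1 haF.1, (min_le_left _ _).trans s.2.2⟩, by fun_prop⟩
  have hFv : F v = F (v.comp tr) := by
    apply hsupp
    intro s hs
    have : tr s = s := Subtype.ext (min_eq_left hs)
    simp [this]
  have hvt : ‖v.comp tr‖ ≤ M * IR := by
    rw [ContinuousMap.norm_le _ (mul_nonneg hM.le hIR0)]
    intro s
    have h1 := hvb (tr s)
    have hle : ((tr s : Set.Icc (0:ℝ) a) : ℝ) ≤ aF := min_le_right _ _
    have hm := (tr s).2
    refine h1.trans (mul_le_mul_of_nonneg_left ?_ hM.le)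
    refine (intervalIntegral.integral_mono_on hm.1 (ii _ i1 _ hm) (ii _ i2 _ hm)
      (fun x hx => hRw x ⟨hx.1, hx.2.trans hm.2⟩)).trans ?_
    apply intervalIntegral.integral_mono_interval le_rfl hm.1 hle _ (ii _ i2 _ haF)
    rw [Filter.EventuallyLE, ae_restrict_iff' measurableSet_Ioc]
    exact Filter.Eventually.of_forall
      (fun x hx => hRn x ⟨hx.1.le, hx.2.trans haF.2⟩)
  have hBFv : ‖B (F v)‖ ≤ ‖B.comp F‖ * (M * IR) := by
    rw [hFv]
    exact ((B.comp F).le_opNorm (v.comp tr)).trans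
      (mul_le_mul_of_nonneg_left hvt (norm_nonneg _))
  set r : ℝ := M ^ 2 * ‖B.comp F‖ * IR with hrdef
  have hr0 : 0 ≤ r := by positivity
  have hub : ∀ s : Set.Icc (0:ℝ) a,
      ‖u s‖ ≤ lam * (r + M * ∫ x in (0:ℝ)..(s:ℝ), δ x * ψ (w x)) := by
    intro s
    rw [hfix s, norm_smul, Real.norm_of_nonneg hlam0.le, hNu s, ← hv s]
    refine mul_le_mul_of_nonneg_left ((norm_add_le _ _).trans (add_le_add ?_ (hvb s))) hlam0.le
    calc ‖T s 0 (B (F v))‖ ≤ ‖T s 0‖ * ‖B (F v)‖ := (T s 0).le_opNorm _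
      _ ≤ M * (‖B.comp F‖ * (M * IR)) :=
        mul_le_mul (hTM s 0 le_rfl s.2.1 s.2.2) hBFv (norm_nonneg _) hM.le
      _ = r := by rw [hrdef]; ring
  have hfin := bihari_aux δ ψ w t.2.1 hlam0 hlam1 hM hr0 (hr t t.2)
    (hδint.mono_set (Set.Icc_subset_Icc_right t.2.2)) hδ0 hψc hψm hψpos hψ0 hw hw0
    (fun s hs => by
      have hs' : s ∈ Set.Icc 0 a := ⟨hs.1, hs.2.trans t.2.2⟩
      rw [hwu s hs']
      exact hub ⟨s, hs'⟩) (hBihari t t.2)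
  calc ‖u t‖ ≤ lam * (r + M * ∫ x in (0:ℝ)..(t:ℝ), δ x * ψ (w x)) := hub t
    _ ≤ lam * R t := mul_le_mul_of_nonneg_left hfin hlam0.le
    _ < R t := by nlinarith [hRpos t t.2]
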